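/- Theorem 4.1, full statement (privacy of all L dataset vectors). Let X be a measurable space, n ≥ 1, d ≥ 1, L ≥ 1. For each layer ℓ ∈ Fin L let C_ℓ > 0 and let φ_ℓ : X → EuclideanSpace ℝ (Fin d) be a measurable map with ‖φ_ℓ(x)‖ ≤ C_ℓ for all x ∈ X. Let ε ∈ (0, 1], δ ∈ (0, 1), and suppose σ_ℓ ≥ (2C_ℓ/n) · √(2 · ln(1.25/δ)) / ε for every ℓ. Then the joint mechanism that, on input D : Fin n → X, outputs the tuple ((1/n) · Σ_{i} φ_ℓ(D i) + ξ_ℓ)_{ℓ ∈ Fin L} with independent ξ_ℓ ∼ N(0, σ_ℓ²I_d) — i.e., the product over ℓ of the pushforwards of N(0, σ_ℓ²I_d) under x ↦ (1/n) · Σ_{i} φ_ℓ(D i) + x — satisfies (L·ε, L·δ)-differential privacy under the substitution neighboring relation. -/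

import Mathlib

/-!
*Composition.* If `μ s ≤ e * ν s + r` for all measurable `s`, the layer-cake formula gives
`∫⁻ f ∂μ ≤ e * ∫⁻ f ∂ν + r` for `f ≤ 1`. Slicing a product set and applying this to the bound for
its slices, truncated at `1`, shows that over independent releases the factors `e` multiply and the
errors `r` add.

*One Gaussian.* Let `p`, `q` be the densities of `N(a, σ² I)` and `N(b, σ² I)`. For `k ≥ 0` and all
real `y` we have `1 - exp (-y) ≤ exp (k * y) / (1 + k)`; taking `y = log (p / q) - ε` and
multiplying by `p` gives `p ≤ exp ε * q + exp (-k * ε) / (1 + k) * p ^ (1 + k) / q ^ k`. Completing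
the square, `p ^ (1 + k) / q ^ k` is `exp (k * (k + 1) * ‖a - b‖ ^ 2 / (2 * σ ^ 2))` times the
density of a third translate of the same Gaussian, so integrating bounds the privacy error. With
`s = 2 * log (1.25 / δ)`, the calibration makes `‖a - b‖ ^ 2 / σ ^ 2` at most `ε ^ 2 / s`, and
`k = s / ε` brings the error below `δ`.
-/

open MeasureTheory
open scoped BigOperators ENNReal

/-- Two size-`n` datasets are neighboring under the substitution relation:
they differ in exactly one coordinate. -/
def Neighbors {X : Type*} {n : ℕ} (D D' : Fin n → X) : Prop :=
  ∃ j : Fin n, D j ≠ D' j ∧ ∀ i : Fin n, i ≠ j → D i = D' i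

/-- `(ε, δ)`-differential privacy of a mechanism on size-`n` datasets. -/
def DP {X : Type*} [MeasurableSpace X] {Ω : Type*} [MeasurableSpace Ω] {n : ℕ}
    (M : (Fin n → X) → Measure Ω) (ε δ : ℝ) : Prop :=
  ∀ D D' : Fin n → X, Neighbors D D' → ∀ O : Set Ω, MeasurableSet O →
    M D O ≤ ENNReal.ofReal (Real.exp ε) * M D' O + ENNReal.ofReal δ

/-- The centered Gaussian measure `N(0, σ² I_d)` on `EuclideanSpace ℝ (Fin d)`,
given by its density with respect to Lebesgue measure. -/
noncomputable def gaussianMeasure (d : ℕ) (σ : ℝ) : Measure (EuclideanSpace ℝ (Fin d)) :=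
  volume.withDensity fun x =>
    ENNReal.ofReal ((2 * Real.pi * σ ^ 2) ^ (-(d : ℝ) / 2) *
      Real.exp (-‖x‖ ^ 2 / (2 * σ ^ 2)))

lemma lintegral_eq_setLIntegral_Ioc_meas_le {α : Type*} [MeasurableSpace α] (μ : Measure α)
    {f : α → ℝ≥0∞} (hf : Measurable f) (hf1 : ∀ x, f x ≤ 1) :
    ∫⁻ x, f x ∂μ = ∫⁻ t in Set.Ioc (0 : ℝ) 1, μ {x | t ≤ (f x).toReal} := by
  have hf_ofReal (x : α) : f x = ENNReal.ofReal (f x).toReal :=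
    (ENNReal.ofReal_toReal ((hf1 x).trans_lt ENNReal.one_lt_top).ne).symm
  have hempty (t : ℝ) (ht : t ∈ Set.Ioi 1) : μ {x | t ≤ (f x).toReal} = 0 := by
    have hlt (x : α) : (f x).toReal < t := (ENNReal.toReal_le_of_le_ofReal zero_le_one
      (by simpa using hf1 x)).trans_lt ht
    simp [(hlt _).not_ge]
  rw [lintegral_congr hf_ofReal, lintegral_eq_lintegral_meas_le μ
    (ae_of_all _ fun _ => ENNReal.toReal_nonneg) hf.ennreal_toReal.aemeasurable,
    ← Set.Ioc_union_Ioi_eq_Ioi zero_le_one, lintegral_union measurableSet_Ioi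
    (Set.Ioc_disjoint_Ioi le_rfl), setLIntegral_eq_zero measurableSet_Ioi hempty, add_zero]

/-- Approximate domination of measures, `D_∞^r(μ ‖ ν) ≤ log e` in terms of the approximate max
divergence. `DP M ε δ` is this relation between `M D` and `M D'` for neighboring datasets, with
`exp ε` and `δ` encoded as the extended nonnegative reals `e` and `r`. -/
def ApproxDominated {α : Type*} [MeasurableSpace α] (μ ν : Measure α) (e r : ℝ≥0∞) : Prop :=
  ∀ s, MeasurableSet s → μ s ≤ e * ν s + r

namespace ApproxDominated

variable {α β : Type*} [MeasurableSpace α] [MeasurableSpace β]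

lemma of_le_smul_add {μ ν ρ : Measure α} {e : ℝ≥0∞} (h : μ ≤ e • ν + ρ) :
    ApproxDominated μ ν e (ρ Set.univ) := fun s _ =>
  calc μ s ≤ e * ν s + ρ s := h s
    _ ≤ e * ν s + ρ Set.univ := by gcongr; exact s.subset_univ

lemma mono_error {μ ν : Measure α} {e r r' : ℝ≥0∞} (h : ApproxDominated μ ν e r) (hr : r ≤ r') :
    ApproxDominated μ ν e r' := fun s hs =>
  (h s hs).trans (by gcongr)

lemma map {μ ν : Measure α} {e r : ℝ≥0∞} (h : ApproxDominated μ ν e r) {f : α → β}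
    (hf : Measurable f) : ApproxDominated (μ.map f) (ν.map f) e r := fun s hs => by
  rw [Measure.map_apply hf hs, Measure.map_apply hf hs]
  exact h _ (hf hs)

lemma lintegral_le {μ ν : Measure α} {e r : ℝ≥0∞} (h : ApproxDominated μ ν e r) {f : α → ℝ≥0∞}
    (hf : Measurable f) (hf1 : ∀ x, f x ≤ 1) : ∫⁻ x, f x ∂μ ≤ e * ∫⁻ x, f x ∂ν + r := by
  have hanti : Antitone fun t : ℝ => ν {x | t ≤ (f x).toReal} := fun t u htu =>
    measure_mono fun _ hx => htu.trans hx
  calc ∫⁻ x, f x ∂μ = ∫⁻ t in Set.Ioc (0 : ℝ) 1, μ {x | t ≤ (f x).toReal} :=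
        lintegral_eq_setLIntegral_Ioc_meas_le μ hf hf1
    _ ≤ ∫⁻ t in Set.Ioc (0 : ℝ) 1, (e * ν {x | t ≤ (f x).toReal} + r) :=
        lintegral_mono fun t => h _ (measurableSet_le measurable_const hf.ennreal_toReal)
    _ = e * ∫⁻ x, f x ∂ν + r := by
        rw [lintegral_add_right _ measurable_const, lintegral_const_mul _ hanti.measurable,
          ← lintegral_eq_setLIntegral_Ioc_meas_le ν hf hf1]
        simp

lemma prod {μ₁ ν₁ : Measure α} {μ₂ ν₂ : Measure β} [IsProbabilityMeasure μ₁]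
    [IsProbabilityMeasure μ₂] [SFinite ν₂] {e₁ r₁ e₂ r₂ : ℝ≥0∞}
    (h₁ : ApproxDominated μ₁ ν₁ e₁ r₁) (h₂ : ApproxDominated μ₂ ν₂ e₂ r₂) :
    ApproxDominated (μ₁.prod μ₂) (ν₁.prod ν₂) (e₁ * e₂) (r₁ + r₂) := fun s hs => by
  have hslice : Measurable fun x => ν₂ (Prod.mk x ⁻¹' s) := measurable_measure_prodMk_left hs
  calc (μ₁.prod μ₂) s = ∫⁻ x, μ₂ (Prod.mk x ⁻¹' s) ∂μ₁ := Measure.prod_apply hs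
    _ ≤ ∫⁻ x, (min 1 (e₂ * ν₂ (Prod.mk x ⁻¹' s)) + r₂) ∂μ₁ := by
        refine lintegral_mono fun x => ?_
        rw [← min_add_add_right]
        exact le_min (prob_le_one.trans le_self_add) (h₂ _ (measurable_prodMk_left hs))
    _ = ∫⁻ x, min 1 (e₂ * ν₂ (Prod.mk x ⁻¹' s)) ∂μ₁ + r₂ := by
        rw [lintegral_add_right _ measurable_const, lintegral_const, measure_univ, mul_one]
    _ ≤ e₁ * ∫⁻ x, min 1 (e₂ * ν₂ (Prod.mk x ⁻¹' s)) ∂ν₁ + r₁ + r₂ := by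
        gcongr
        exact h₁.lintegral_le (measurable_const.min (hslice.const_mul e₂)) fun _ => min_le_left _ _
    _ ≤ e₁ * ∫⁻ x, e₂ * ν₂ (Prod.mk x ⁻¹' s) ∂ν₁ + r₁ + r₂ := by
        gcongr
        exact min_le_right _ _
    _ = e₁ * e₂ * (ν₁.prod ν₂) s + (r₁ + r₂) := by
        rw [lintegral_const_mul _ hslice, Measure.prod_apply hs]
        ring

lemma pi {ι : Type*} [hι : Fintype ι] {Ω : ι → Type*} [∀ i, MeasurableSpace (Ω i)]
    {μ ν : ∀ i, Measure (Ω i)} [∀ i, IsProbabilityMeasure (μ i)] [∀ i, SigmaFinite (ν i)]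
    {e r : ι → ℝ≥0∞} (h : ∀ i, ApproxDominated (μ i) (ν i) (e i) (r i)) :
    ApproxDominated (Measure.pi μ) (Measure.pi ν) (∏ i, e i) (∑ i, r i) := by
  revert e r Ω
  -- The reverted binders are implicit: without `no_implicit_lambda%`, `refine` introduces them
  -- before the motive is abstracted.
  refine no_implicit_lambda%
    (Fintype.induction_empty_option ?of_equiv ?h_empty ?h_option ι (h_fintype := hι))
  case of_equiv =>
    intro ι ι' _ f ih Ω _ μ ν _ _ e r h
    let : Fintype ι := Fintype.ofEquiv ι' f.symm
    rw [← Measure.pi_map_piCongrLeft f μ, ← Measure.pi_map_piCongrLeft f ν, ← f.prod_comp,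
      ← f.sum_comp]
    exact (ih fun i => h (f i)).map (MeasurableEquiv.measurable _)
  case h_empty =>
    intro Ω _ μ ν _ _ e r _
    rw [Measure.pi_of_empty μ, Measure.pi_of_empty ν]
    exact fun s _ => by simp
  case h_option =>
    intro ι _ ih Ω _ μ ν _ _ e r h
    rw [← Measure.pi_map_piOptionEquivProd μ, ← Measure.pi_map_piOptionEquivProd ν,
      Fintype.prod_option, Fintype.sum_option, mul_comm, add_comm]
    exact ((ih fun i => h (some i)).prod (h none)).map (MeasurableEquiv.measurable _)

end ApproxDominated

theorem DP.pi {X : Type*} [MeasurableSpace X] {n : ℕ} {ι : Type*} [Fintype ι] {Ω : ι → Type*}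
    [∀ i, MeasurableSpace (Ω i)] {M : ∀ i, (Fin n → X) → Measure (Ω i)}
    [∀ i D, IsProbabilityMeasure (M i D)] {ε δ : ι → ℝ} (hδ : ∀ i, 0 ≤ δ i)
    (h : ∀ i, DP (M i) (ε i) (δ i)) :
    DP (fun D => Measure.pi fun i => M i D) (∑ i, ε i) (∑ i, δ i) := by
  intro D D' hDD'
  rw [Real.exp_sum, ENNReal.ofReal_prod_of_nonneg fun _ _ => (Real.exp_pos _).le,
    ENNReal.ofReal_sum_of_nonneg fun i _ => hδ i]
  exact ApproxDominated.pi fun i => h i D D' hDD'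

lemma one_sub_exp_neg_le {k : ℝ} (hk : 0 ≤ k) (y : ℝ) :
    1 - Real.exp (-y) ≤ Real.exp (k * y) / (1 + k) := by
  have hexp_mul := Real.add_one_le_exp (k * y)
  have hmul_exp := mul_le_mul_of_nonneg_left (Real.add_one_le_exp (-y)) hk
  rw [le_div_iff₀ (by positivity)]
  linarith [Real.exp_pos (-y)]

lemma exp_neg_norm_sq_le {E : Type*} [NormedAddCommGroup E] [InnerProductSpace ℝ E] {σ k : ℝ}
    (hσ : σ ≠ 0) (hk : 0 ≤ k) (ε : ℝ) (x u : E) :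
    Real.exp (-‖x‖ ^ 2 / (2 * σ ^ 2)) ≤
      Real.exp ε * Real.exp (-‖x + u‖ ^ 2 / (2 * σ ^ 2)) +
        Real.exp (k * ((k + 1) * (‖u‖ ^ 2 / σ ^ 2) / 2 - ε)) / (1 + k) *
          Real.exp (-‖x - k • u‖ ^ 2 / (2 * σ ^ 2)) := by
  set y : ℝ := (‖x + u‖ ^ 2 - ‖x‖ ^ 2) / (2 * σ ^ 2) - ε with hy
  have hshift : Real.exp (-y) * Real.exp (-‖x‖ ^ 2 / (2 * σ ^ 2)) =
      Real.exp ε * Real.exp (-‖x + u‖ ^ 2 / (2 * σ ^ 2)) := by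
    rw [← Real.exp_add, ← Real.exp_add, hy]
    ring_nf
  have htilt : Real.exp (k * y) * Real.exp (-‖x‖ ^ 2 / (2 * σ ^ 2)) =
      Real.exp (k * ((k + 1) * (‖u‖ ^ 2 / σ ^ 2) / 2 - ε)) *
        Real.exp (-‖x - k • u‖ ^ 2 / (2 * σ ^ 2)) := by
    rw [← Real.exp_add, ← Real.exp_add, hy, norm_add_sq_real, norm_sub_sq_real, norm_smul,
      inner_smul_right, mul_pow, Real.norm_eq_abs, sq_abs]
    congr 1
    field_simp
    ring
  rw [div_mul_eq_mul_div, ← htilt, ← hshift, mul_div_right_comm, ← add_mul]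
  exact le_mul_of_one_le_left (Real.exp_pos _).le (by linarith [one_sub_exp_neg_le hk y])

lemma map_const_add_withDensity {G : Type*} [AddCommGroup G] [MeasurableSpace G]
    [MeasurableAdd G] (μ : Measure G) [μ.IsAddLeftInvariant] (f : G → ℝ≥0∞) (a : G) :
    (μ.withDensity f).map (fun x => a + x) = μ.withDensity fun x => f (x - a) := by
  ext s hs
  have ha : Measurable fun x : G => a + x := measurable_const_add a
  rw [Measure.map_apply ha hs, withDensity_apply _ (ha hs), withDensity_apply _ hs,
    ← lintegral_indicator (ha hs), ← lintegral_indicator hs,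
    ← lintegral_add_left_eq_self (s.indicator _) a]
  exact lintegral_congr fun x => by
    simp only [Set.indicator, add_sub_cancel_left]
    rfl

/-- The density of `gaussianMeasure d σ`. -/
noncomputable def gaussianDensity (d : ℕ) (σ : ℝ) (x : EuclideanSpace ℝ (Fin d)) : ℝ :=
  (2 * Real.pi * σ ^ 2) ^ (-(d : ℝ) / 2) * Real.exp (-‖x‖ ^ 2 / (2 * σ ^ 2))

section Gaussian

variable {d : ℕ} {σ : ℝ}

lemma gaussianMeasure_eq_withDensity :
    gaussianMeasure d σ = volume.withDensity fun x => ENNReal.ofReal (gaussianDensity d σ x) :=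
  rfl

lemma gaussianDensity_nonneg (x : EuclideanSpace ℝ (Fin d)) : 0 ≤ gaussianDensity d σ x := by
  unfold gaussianDensity
  positivity

lemma measurable_gaussianDensity : Measurable (gaussianDensity d σ) := by
  unfold gaussianDensity
  fun_prop

lemma integral_gaussianDensity (hσ : σ ≠ 0) : ∫ x, gaussianDensity d σ x = 1 := by
  have hπσ : 0 < 2 * Real.pi * σ ^ 2 := by positivity
  have hexp (x : EuclideanSpace ℝ (Fin d)) :
      -‖x‖ ^ 2 / (2 * σ ^ 2) = -(1 / (2 * σ ^ 2)) * ‖x‖ ^ 2 := by ring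
  have hbase : Real.pi / (1 / (2 * σ ^ 2)) = 2 * Real.pi * σ ^ 2 := by field_simp
  simp_rw [gaussianDensity, hexp]
  rw [integral_const_mul, GaussianFourier.integral_rexp_neg_mul_sq_norm (by positivity),
    finrank_euclideanSpace_fin, hbase, ← Real.rpow_add hπσ, neg_div, neg_add_cancel,
    Real.rpow_zero]

lemma isProbabilityMeasure_gaussianMeasure (hσ : σ ≠ 0) :
    IsProbabilityMeasure (gaussianMeasure d σ) := by
  have hintegrable : Integrable (gaussianDensity d σ) :=
    .of_integral_ne_zero (by simp [integral_gaussianDensity hσ])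
  constructor
  rw [gaussianMeasure_eq_withDensity, withDensity_apply _ MeasurableSet.univ,
    Measure.restrict_univ, ← ofReal_integral_eq_lintegral_ofReal hintegrable
      (ae_of_all _ gaussianDensity_nonneg), integral_gaussianDensity hσ, ENNReal.ofReal_one]

lemma isProbabilityMeasure_map_add_gaussianMeasure (hσ : σ ≠ 0)
    (a : EuclideanSpace ℝ (Fin d)) :
    IsProbabilityMeasure ((gaussianMeasure d σ).map fun x => a + x) :=
  haveI := isProbabilityMeasure_gaussianMeasure (d := d) hσ
  Measure.isProbabilityMeasure_map (measurable_const_add a).aemeasurable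

lemma gaussianDensity_le {k : ℝ} (hσ : σ ≠ 0) (hk : 0 ≤ k) (ε : ℝ)
    (x u : EuclideanSpace ℝ (Fin d)) :
    gaussianDensity d σ x ≤ Real.exp ε * gaussianDensity d σ (x + u) +
      Real.exp (k * ((k + 1) * (‖u‖ ^ 2 / σ ^ 2) / 2 - ε)) / (1 + k) *
        gaussianDensity d σ (x - k • u) := by
  unfold gaussianDensity
  rw [mul_left_comm (Real.exp ε), mul_left_comm (_ / _), ← mul_add]
  gcongr
  exact exp_neg_norm_sq_le hσ hk ε x u

lemma map_add_gaussianMeasure_le {k : ℝ} (hσ : σ ≠ 0) (hk : 0 ≤ k) (ε : ℝ)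
    (a b : EuclideanSpace ℝ (Fin d)) :
    (gaussianMeasure d σ).map (fun x => a + x) ≤
      ENNReal.ofReal (Real.exp ε) • (gaussianMeasure d σ).map (fun x => b + x) +
      ENNReal.ofReal (Real.exp (k * ((k + 1) * (‖a - b‖ ^ 2 / σ ^ 2) / 2 - ε)) / (1 + k)) •
        (gaussianMeasure d σ).map (fun x => a + k • (a - b) + x) := by
  have hmeas (c : EuclideanSpace ℝ (Fin d)) :
      Measurable fun x => ENNReal.ofReal (gaussianDensity d σ (x - c)) :=
    (measurable_gaussianDensity.comp (measurable_id.sub_const c)).ennreal_ofReal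
  simp_rw [gaussianMeasure_eq_withDensity, map_const_add_withDensity]
  rw [← withDensity_smul _ (hmeas _), ← withDensity_smul _ (hmeas _),
    ← withDensity_add_left ((hmeas _).const_smul _)]
  refine withDensity_mono (ae_of_all _ fun x => ?_)
  have hle := gaussianDensity_le hσ hk ε (x - a) (a - b)
  rw [sub_add_sub_cancel, sub_sub] at hle
  simp only [Pi.add_apply, Pi.smul_apply, smul_eq_mul]
  rw [← ENNReal.ofReal_mul (by positivity), ← ENNReal.ofReal_mul (by positivity),
    ← ENNReal.ofReal_add (mul_nonneg (by positivity) (gaussianDensity_nonneg _))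
      (mul_nonneg (by positivity) (gaussianDensity_nonneg _))]
  exact ENNReal.ofReal_le_ofReal hle

lemma approxDominated_map_add_gaussianMeasure {k : ℝ} (hσ : σ ≠ 0) (hk : 0 ≤ k) (ε : ℝ)
    (a b : EuclideanSpace ℝ (Fin d)) :
    ApproxDominated ((gaussianMeasure d σ).map fun x => a + x)
      ((gaussianMeasure d σ).map fun x => b + x) (ENNReal.ofReal (Real.exp ε))
      (ENNReal.ofReal (Real.exp (k * ((k + 1) * (‖a - b‖ ^ 2 / σ ^ 2) / 2 - ε)) / (1 + k))) := by
  have := isProbabilityMeasure_map_add_gaussianMeasure hσ (a + k • (a - b))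
  simpa using ApproxDominated.of_le_smul_add (map_add_gaussianMeasure_le hσ hk ε a b)

end Gaussian

section Calibration

variable {ε δ : ℝ}

lemma two_fifths_le_two_mul_log (hδ0 : 0 < δ) (hδ1 : δ ≤ 1) : 2 / 5 ≤ 2 * Real.log (1.25 / δ) := by
  have hle : (1.25 : ℝ) ≤ 1.25 / δ := le_div_self (by norm_num) hδ0 hδ1
  have hlog := Real.one_sub_inv_le_log_of_pos (show (0 : ℝ) < 1.25 by norm_num)
  linarith [Real.log_le_log (by norm_num) hle]

lemma exp_half_sub_log_div_le (hε : 0 < ε) (hε1 : ε ≤ 1) (hδ0 : 0 < δ) (hδ1 : δ ≤ 1) :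
    Real.exp (ε / 2 - Real.log (1.25 / δ)) / (1 + 2 * Real.log (1.25 / δ) / ε) ≤ δ := by
  have hlog := two_fifths_le_two_mul_log hδ0 hδ1
  have hden : 7 / 5 ≤ 1 + 2 * Real.log (1.25 / δ) / ε := by
    linarith [le_div_self (by linarith) hε hε1 (a := 2 * Real.log (1.25 / δ))]
  have hexp : Real.exp (ε / 2) ≤ 7 / 4 := by
    have hsq : Real.exp (1 / 2) ^ 2 ≤ (7 / 4) ^ 2 := by
      rw [← Real.exp_nat_mul]
      norm_num
      linarith [Real.exp_one_lt_three]
    exact (Real.exp_le_exp.2 (by linarith)).trans (le_of_sq_le_sq hsq (by norm_num))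
  rw [Real.exp_sub, Real.exp_log (by positivity), div_le_iff₀ (by linarith)]
  calc Real.exp (ε / 2) / (1.25 / δ) ≤ 7 / 4 / (1.25 / δ) := by gcongr
    _ = δ * (7 / 5) := by field_simp; norm_num
    _ ≤ δ * (1 + 2 * Real.log (1.25 / δ) / ε) := by gcongr

/-- The exponent `k * ((k + 1) * (ε ^ 2 / s) / 2 - ε)` is smallest at `k = s / ε - 1 / 2`; the
simpler `k = s / ε` loses only `ε ^ 2 / (8 * s)`. -/
lemma tilt_exponent_le {s t : ℝ} (hε : 0 < ε) (hs : 0 < s) (ht : t ≤ ε ^ 2 / s) :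
    s / ε * ((s / ε + 1) * t / 2 - ε) ≤ ε / 2 - s / 2 :=
  calc s / ε * ((s / ε + 1) * t / 2 - ε) ≤ s / ε * ((s / ε + 1) * (ε ^ 2 / s) / 2 - ε) := by gcongr
    _ = ε / 2 - s / 2 := by
      field_simp
      ring

lemma exp_tilt_exponent_div_le {t : ℝ} (hε : 0 < ε) (hε1 : ε ≤ 1) (hδ0 : 0 < δ) (hδ1 : δ ≤ 1)
    (ht : t ≤ ε ^ 2 / (2 * Real.log (1.25 / δ))) :
    Real.exp (2 * Real.log (1.25 / δ) / ε * ((2 * Real.log (1.25 / δ) / ε + 1) * t / 2 - ε)) /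
      (1 + 2 * Real.log (1.25 / δ) / ε) ≤ δ := by
  have hlog := two_fifths_le_two_mul_log hδ0 hδ1
  have hexponent := tilt_exponent_le hε (by linarith) ht
  rw [mul_div_cancel_left₀ _ two_ne_zero] at hexponent
  refine le_trans ?_ (exp_half_sub_log_div_le hε hε1 hδ0 hδ1)
  gcongr

end Calibration

theorem DP.gaussian_mechanism {X : Type*} [MeasurableSpace X] {n d : ℕ}
    {q : (Fin n → X) → EuclideanSpace ℝ (Fin d)} {Δ ε δ σ : ℝ}
    (hq : ∀ D D', Neighbors D D' → ‖q D - q D'‖ ≤ Δ) (hε : 0 < ε) (hε1 : ε ≤ 1) (hδ0 : 0 < δ)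
    (hδ1 : δ ≤ 1) (hσ0 : 0 < σ) (hσ : Δ * √(2 * Real.log (1.25 / δ)) / ε ≤ σ) :
    DP (fun D => (gaussianMeasure d σ).map fun x => q D + x) ε δ := by
  intro D D' hDD'
  have hlog : 0 < Real.log (1.25 / δ) := by linarith [two_fifths_le_two_mul_log hδ0 hδ1]
  have hratio : ‖q D - q D'‖ ^ 2 / σ ^ 2 ≤ ε ^ 2 / (2 * Real.log (1.25 / δ)) := by
    have hscale : ‖q D - q D'‖ * √(2 * Real.log (1.25 / δ)) ≤ σ * ε := by
      rw [← div_le_iff₀ hε]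
      exact le_trans (by gcongr; exact hq D D' hDD') hσ
    have hsq := pow_le_pow_left₀ (by positivity) hscale 2
    rw [mul_pow, mul_pow, Real.sq_sqrt (by positivity)] at hsq
    rw [div_le_div_iff₀ (by positivity) (by positivity)]
    linarith
  exact (approxDominated_map_add_gaussianMeasure hσ0.ne' (by positivity) ε (q D) (q D')).mono_error
    (ENNReal.ofReal_le_ofReal (exp_tilt_exponent_div_le hε hε1 hδ0 hδ1 hratio))

lemma Neighbors.norm_mean_sub_le {X E : Type*} [SeminormedAddCommGroup E] [NormedSpace ℝ E]
    {n : ℕ} {C : ℝ} {f : X → E} (hf : ∀ x, ‖f x‖ ≤ C) {D D' : Fin n → X} (h : Neighbors D D') :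
    ‖(1 / (n : ℝ)) • (∑ i, f (D i)) - (1 / (n : ℝ)) • (∑ i, f (D' i))‖ ≤ 2 * C / n := by
  obtain ⟨j, -, hj⟩ := h
  have hsum : ∑ i, f (D i) - ∑ i, f (D' i) = f (D j) - f (D' j) := by
    rw [← Finset.sum_sub_distrib]
    exact Finset.sum_eq_single j (fun i _ hi => by rw [hj i hi, sub_self]) (by simp)
  rw [← smul_sub, hsum, norm_smul, Real.norm_of_nonneg (by positivity)]
  calc 1 / (n : ℝ) * ‖f (D j) - f (D' j)‖ ≤ 1 / (n : ℝ) * (C + C) := by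
        gcongr
        exact norm_sub_le_of_le (hf _) (hf _)
    _ = 2 * C / n := by ring

theorem dataset_vectors_dp_all_layers_general {X : Type*} [MeasurableSpace X] {n : ℕ}
    {ι : Type*} [Fintype ι] {d : ι → ℕ} (hn : 1 ≤ n) {C : ι → ℝ} (hC : ∀ ℓ, 0 < C ℓ)
    {φ : ∀ ℓ, X → EuclideanSpace ℝ (Fin (d ℓ))} (hclip : ∀ ℓ x, ‖φ ℓ x‖ ≤ C ℓ)
    {ε δ σ : ι → ℝ} (hε : ∀ ℓ, 0 < ε ℓ) (hε1 : ∀ ℓ, ε ℓ ≤ 1) (hδ0 : ∀ ℓ, 0 < δ ℓ)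
    (hδ1 : ∀ ℓ, δ ℓ ≤ 1)
    (hσ : ∀ ℓ, 2 * C ℓ / n * √(2 * Real.log (1.25 / δ ℓ)) / ε ℓ ≤ σ ℓ) :
    DP (fun D : Fin n → X => Measure.pi fun ℓ =>
        (gaussianMeasure (d ℓ) (σ ℓ)).map fun x => (1 / (n : ℝ)) • (∑ i, φ ℓ (D i)) + x)
      (∑ ℓ, ε ℓ) (∑ ℓ, δ ℓ) := by
  have hσ0 (ℓ : ι) : 0 < σ ℓ := by
    have hlog : 0 < 2 * Real.log (1.25 / δ ℓ) := by
      linarith [two_fifths_le_two_mul_log (hδ0 ℓ) (hδ1 ℓ)]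
    have hCℓ := hC ℓ
    have hεℓ := hε ℓ
    exact lt_of_lt_of_le (by positivity) (hσ ℓ)
  have (ℓ : ι) (D : Fin n → X) := isProbabilityMeasure_map_add_gaussianMeasure (hσ0 ℓ).ne'
    ((1 / (n : ℝ)) • ∑ i, φ ℓ (D i))
  exact DP.pi (fun ℓ => (hδ0 ℓ).le) fun ℓ => DP.gaussian_mechanism
    (fun _ _ hDD' => hDD'.norm_mean_sub_le (hclip ℓ)) (hε ℓ) (hε1 ℓ) (hδ0 ℓ) (hδ1 ℓ) (hσ0 ℓ) (hσ ℓ)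

/-- **Theorem 4.1, full statement.** Jointly releasing, for each of `L` layers,
the noisy empirical mean of per-example clipped vectors `φ ℓ (D i)` (each of
norm at most `C ℓ`) with independent Gaussian noise of scale
`σ ℓ ≥ (2 C ℓ / n) √(2 ln(1.25/δ)) / ε` is `(Lε, Lδ)`-differentially private
under the substitution neighboring relation. -/
theorem dataset_vectors_dp_all_layers {X : Type*} [MeasurableSpace X] {n d L : ℕ}
    (hn : 1 ≤ n) (hd : 1 ≤ d) (hL : 1 ≤ L)
    (C : Fin L → ℝ) (hC : ∀ ℓ, 0 < C ℓ)
    (φ : Fin L → X → EuclideanSpace ℝ (Fin d)) (hφ : ∀ ℓ, Measurable (φ ℓ))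
    (hclip : ∀ ℓ (x : X), ‖φ ℓ x‖ ≤ C ℓ)
    {ε δ : ℝ} (σ : Fin L → ℝ) (hε : 0 < ε) (hε1 : ε ≤ 1) (hδ0 : 0 < δ) (hδ1 : δ < 1)
    (hσ : ∀ ℓ, σ ℓ ≥ (2 * C ℓ / n) * Real.sqrt (2 * Real.log (1.25 / δ)) / ε) :
    DP (fun D : Fin n → X => Measure.pi (fun ℓ : Fin L =>
        (gaussianMeasure d (σ ℓ)).map
          (fun x => (1 / (n : ℝ)) • (∑ i, φ ℓ (D i)) + x)))
      ((L : ℝ) * ε) ((L : ℝ) * δ) := by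
  simpa using dataset_vectors_dp_all_layers_general hn hC hclip (fun _ => hε) (fun _ => hε1)
    (fun _ => hδ0) (fun _ => hδ1.le) hσ
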